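/- Let W be the Wiener measure on Ω and let (ε_n)_{n≥1} be a positive sequence decreasing to 0 such that log ε_n ∼ log ε_{n+1} as n → ∞. Then for every ω̄ ∈ Ω: underline-ord_loc W(ω̄) ≥ liminf_{n→∞} log(−log W(C_n(ω̄,ε_n)))/(−log ε_n) and overline-ord_loc W(ω̄) ≥ limsup_{n→∞} log(−log W(C_n(ω̄,ε_n)))/(−log ε_n). -/

import Mathlib

open scoped ENNReal NNReal Topology
open Filter MeasureTheory Metric Set

noncomputable section

namespace Multifractal


/-- The `δ`-level Hausdorff pre-measure `H^h_δ` associated to a gauge `h`. -/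
def hMeasAux {X : Type*} [MetricSpace X] (h : ℝ → ℝ) (δ : ℝ≥0∞) (E : Set X) : ℝ≥0∞ :=
  ⨅ (c : ℕ → X) (r : ℕ → ℝ) (_ : ∀ n, 0 < r n ∧ ENNReal.ofReal (r n) ≤ δ)
    (_ : E ⊆ ⋃ n, Metric.ball (c n) (r n)), ∑' n, ENNReal.ofReal (h (r n))

/-- The `h`-Hausdorff measure. -/
def hMeas {X : Type*} [MetricSpace X] (h : ℝ → ℝ) (E : Set X) : ℝ≥0∞ :=
  ⨆ (δ : ℝ≥0∞) (_ : 0 < δ), hMeasAux h δ E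

/-- `Ω`: continuous paths on `[0,1]` vanishing at `0`, with the uniform metric. -/
abbrev PathSpace : Type := {f : C(unitInterval, ℝ) // f 0 = 0}

instance : MeasurableSpace PathSpace := borel PathSpace
instance : BorelSpace PathSpace := ⟨rfl⟩

/-- `μ` is a centered Gaussian process measure on path space with covariance `K`:
a probability measure under which every finite linear combination of coordinates
is a centered real Gaussian with the variance given by `K`. -/
def IsGaussianProcess (μ : Measure PathSpace) (K : unitInterval → unitInterval → ℝ) : Prop :=
  IsProbabilityMeasure μ ∧
  ∀ (n : ℕ) (t : Fin n → unitInterval) (c : Fin n → ℝ),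
    Measure.map (fun ω : PathSpace => ∑ i, c i * ω.1 (t i)) μ =
      ProbabilityTheory.gaussianReal 0
        (Real.toNNReal (∑ i, ∑ j, c i * c j * K (t i) (t j)))

/-- `W` is the Wiener measure: the coordinate process is centered Gaussian with
covariance `min s t`. -/
def IsWienerMeasure (W : Measure PathSpace) : Prop :=
  IsGaussianProcess W (fun s t => min (s : ℝ) (t : ℝ))

/-- `μ` is the law of fractional Brownian motion with Hurst parameter `H`. -/
def IsFBM (H : ℝ) (μ : Measure PathSpace) : Prop :=
  IsGaussianProcess μ (fun s t =>
    ((s : ℝ) ^ (2*H) + (t : ℝ) ^ (2*H) - |(t : ℝ) - (s : ℝ)| ^ (2*H)) / 2)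

/-- Clamping of a real number into the unit interval. -/
def clampI (t : ℝ) : unitInterval :=
  ⟨min (max t 0) 1, Set.mem_Icc.mpr ⟨le_min (le_max_right _ _) zero_le_one, min_le_right _ _⟩⟩

/-- The grid point `j/n` of the unit interval. -/
def gridPt (n j : ℕ) : unitInterval := clampI ((j : ℝ) / n)

/-- The discrete quadratic variation `Q_n(ω)`. -/
def Qvar (ω : PathSpace) (n : ℕ) : ℝ :=
  Real.sqrt ((1 / (n : ℝ)) *
    ∑ i ∈ Finset.range n, (ω.1 (gridPt n (i+1)) - ω.1 (gridPt n i)) ^ 2)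

/-- Lower Orey exponent `q^-(ω)`. -/
def oreyLower (ω : PathSpace) : EReal :=
  liminf (fun n : ℕ => ((-Real.log (Qvar ω n) / Real.log n : ℝ) : EReal)) atTop

/-- Upper Orey exponent `q^+(ω)`. -/
def oreyUpper (ω : PathSpace) : EReal :=
  limsup (fun n : ℕ => ((-Real.log (Qvar ω n) / Real.log n : ℝ) : EReal)) atTop

/-- The set `C_a` of `a`-Hölder paths. -/
def holderSet (a : ℝ) : Set PathSpace :=
  {ω | ∃ C : ℝ, ∀ x y : unitInterval, |ω.1 x - ω.1 y| ≤ C * |(x : ℝ) - (y : ℝ)| ^ a}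

/-- The set `C_a^- = ⋂_{0<b<a} C_b` of nearly `a`-Hölder paths. -/
def holderMinus (a : ℝ) : Set PathSpace := ⋂ b ∈ Set.Ioo (0:ℝ) a, holderSet b

/-- The set `C_q^crit` of critical `q`-Hölder paths: nearly `q`-Hölder paths whose
Orey exponent exists and equals `q`. -/
def holderCrit (q : ℝ) : Set PathSpace :=
  {ω | ω ∈ holderMinus q ∧ oreyLower ω = (q : EReal) ∧ oreyUpper ω = (q : EReal)}

/-- The set `Ω^crit` of critical Hölder paths. -/
def pathCrit : Set PathSpace := ⋃ q ∈ Set.Ioo (0:ℝ) 1, holderCrit q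

/-- The lower local order of a measure `μ` on path space at `ω`. -/
def lowerLocOrd (μ : Measure PathSpace) (ω : PathSpace) : EReal :=
  liminf (fun ε : ℝ =>
    ((Real.log (-Real.log ((μ (Metric.ball ω ε)).toReal)) / (-Real.log ε) : ℝ) : EReal))
    (𝓝[>] (0:ℝ))

/-- The upper local order of a measure `μ` on path space at `ω`. -/
def upperLocOrd (μ : Measure PathSpace) (ω : PathSpace) : EReal :=
  limsup (fun ε : ℝ =>
    ((Real.log (-Real.log ((μ (Metric.ball ω ε)).toReal)) / (-Real.log ε) : ℝ) : EReal))
    (𝓝[>] (0:ℝ))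

/-- The Hausdorff order of a set of paths: `sup {α > 0 : H^{h_α}(A) = ∞}` where
`h_α(ε) = exp(-ε^{-α})`. -/
def ordH (A : Set PathSpace) : ℝ≥0∞ :=
  ⨆ (α : ℝ) (_ : 0 < α ∧ hMeas (fun ε : ℝ => Real.exp (-(ε ^ (-α)))) A = ∞),
    ENNReal.ofReal α

/-- The level set `E(ξ)` of paths at which the local order of `μ` exists and
equals `ξ`. -/
def levelOrd (μ : Measure PathSpace) (ξ : ℝ) : Set PathSpace :=
  {ω | lowerLocOrd μ ω = (ξ : EReal) ∧ upperLocOrd μ ω = (ξ : EReal)}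

/-- The cylinder `C_n(ω̄, ε)` around `ω̄` of depth `n` and radius `ε`. -/
def cylinder (ωb : PathSpace) (n : ℕ) (ε : ℝ) : Set PathSpace :=
  {ω | ∀ j ∈ Finset.Icc 1 n, |ω.1 (gridPt n j) - ωb.1 (gridPt n j)| ≤ ε}

/-- The affine interpolation `L̄_j` of `ω̄` on `[(j-1)/n, j/n]`, evaluated at `t`. -/
def affInterp (ωb : PathSpace) (n j : ℕ) (t : ℝ) : ℝ :=
  ωb.1 (gridPt n (j-1)) +
    (t - ((j-1 : ℕ) : ℝ) / n) * n * (ωb.1 (gridPt n j) - ωb.1 (gridPt n (j-1)))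

/-- The maximal deviation `Δ_n(ω̄)` of `ω̄` from its chords on the `1/n`-grid. -/
def chordDev (ωb : PathSpace) (n : ℕ) : ℝ :=
  sSup {d : ℝ | ∃ j ∈ Finset.Icc 1 n, ∃ t ∈ Set.Icc (((j-1 : ℕ) : ℝ) / n) ((j : ℝ) / n),
    d = |ωb.1 (clampI t) - affInterp ωb n j t|}

/-!
Let `s > 0`. Under the Wiener measure `W` the coordinate `ω s` is independent of the remainder
`ω - ω s • (min s · / s)`, so translation along `c • min s ·` only moves a nondegenerate Gaussian
and leaves `W` quasi-invariant. The paths `min s ·` span a dense subspace, because it contains the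
piecewise affine paths; as the support of `W` is closed, nonempty and stable under these
translations, it is the whole path space. Hence every ball has positive measure.

The cylinders `C_n(ω̄, ε_n)` shrink to the null set `{ω̄}`, so `log (-log W(C_n(ω̄, ε_n)))` is
eventually nonnegative. If `ε_{n+1} < r ≤ ε_n`, then `B(ω̄, r) ⊆ C_n(ω̄, ε_n)`, and
`log ε_n ∼ log ε_{n+1}` allows `-log r` to be replaced by `-log ε_n` in the quotient.
-/

section QuasiInvariance

open ProbabilityTheory

variable {E F : Type*} [MeasurableSpace E] [MeasurableSpace F]

lemma map_mem_support_of_quasiMeasurePreserving [TopologicalSpace E] [TopologicalSpace F]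
    {μ : Measure E} {ν : Measure F} {f : E → F} (hf : Measure.QuasiMeasurePreserving f μ ν)
    {x : E} (hfx : ContinuousAt f x) (hx : x ∈ μ.support) : f x ∈ ν.support := by
  rw [Measure.mem_support_iff_forall] at hx ⊢
  exact fun U hU => pos_iff_ne_zero.2 fun h0 =>
    (hx _ (hfx.preimage_mem_nhds hU)).ne' (hf.preimage_null h0)

/-- The translations under which `μ` is quasi-invariant: the vectors `h` such that the law of
`x + h` under `μ` is absolutely continuous with respect to `μ`. For a Gaussian measure this is its
Cameron–Martin space. -/
def quasiInvariantShifts [AddMonoid E] [MeasurableAdd E] (μ : Measure E) : AddSubmonoid E where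
  carrier := {h | Measure.QuasiMeasurePreserving (· + h) μ μ}
  zero_mem' := by simpa using! Measure.QuasiMeasurePreserving.id μ
  add_mem' {a b} ha hb := by simpa [Function.comp_def, add_assoc] using hb.comp ha

lemma support_eq_univ_of_dense_quasiInvariantShifts [AddGroup E] [TopologicalSpace E]
    [ContinuousAdd E] [MeasurableAdd E] [HereditarilyLindelofSpace E] {μ : Measure E}
    (hμ : μ ≠ 0) (hdense : Dense (quasiInvariantShifts μ : Set E)) : μ.support = univ := by
  obtain ⟨x, hx⟩ := Measure.nonempty_support hμ
  have hsub : (fun h => x + h) '' (quasiInvariantShifts μ : Set E) ⊆ μ.support := by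
    rintro _ ⟨h, hh, rfl⟩
    exact map_mem_support_of_quasiMeasurePreserving hh (by fun_prop) hx
  have htrans : Dense ((fun h => x + h) '' (quasiInvariantShifts μ : Set E)) :=
    (Homeomorph.addLeft x).surjective.denseRange.dense_image (by fun_prop) hdense
  exact (htrans.mono hsub).closure_eq ▸ (Measure.isClosed_support.closure_eq).symm

lemma mem_quasiInvariantShifts_gaussianReal {m : ℝ} {v : ℝ≥0} (hv : v ≠ 0) (c : ℝ) :
    c ∈ quasiInvariantShifts (gaussianReal m v) where
  measurable := by fun_prop
  absolutelyContinuous := by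
    rw [gaussianReal_map_add_const]
    exact (gaussianReal_absolutelyContinuous _ hv).trans (gaussianReal_absolutelyContinuous' _ hv)

/- Only the law of the component `ξ` along `k` is translated by `c • k`; the law of the independent
remainder `x - ξ x • k` is unaffected. -/
lemma smul_mem_quasiInvariantShifts_of_indepFun [AddCommGroup E] [Module ℝ E] [MeasurableAdd₂ E]
    [MeasurableSub₂ E] [MeasurableSMul ℝ E] {μ : Measure E} [IsFiniteMeasure μ] {ξ : E → ℝ}
    (hξ : Measurable ξ) {k : E} (hind : IndepFun ξ (fun x => x - ξ x • k) μ) {c : ℝ}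
    (hc : c ∈ quasiInvariantShifts (μ.map ξ)) : c • k ∈ quasiInvariantShifts μ := by
  have hres : Measurable fun x => x - ξ x • k := measurable_id.sub (hξ.smul_const k)
  let ν := (μ.map ξ).prod (μ.map fun x => x - ξ x • k)
  let Φ : ℝ × E → E := fun p => p.2 + p.1 • k
  have hΦm : Measurable Φ := measurable_snd.add (measurable_fst.smul_const k)
  have hΦ : MeasurePreserving Φ ν μ := by
    have hν : ν = μ.map fun x => (ξ x, x - ξ x • k) :=
      (hind.map_prod_eq_prod_map_map hξ.aemeasurable hres.aemeasurable).symm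
    refine ⟨hΦm, ?_⟩
    rw [hν, Measure.map_map hΦm (hξ.prodMk hres)]
    simp [Φ, Function.comp_def]
  have hshift : Measure.QuasiMeasurePreserving (Prod.map (· + c) id) ν ν := by
    refine ⟨by fun_prop, ?_⟩
    rw [← Measure.map_prod_map _ _ (by fun_prop) (by fun_prop), Measure.map_id]
    exact hc.absolutelyContinuous.prod .rfl
  have hcomm : (· + c • k) ∘ Φ = Φ ∘ Prod.map (· + c) id := by
    ext p
    simp [Φ, add_smul, add_assoc]
  refine ⟨by fun_prop, ?_⟩
  calc μ.map (· + c • k) = (ν.map Φ).map (· + c • k) := by rw [hΦ.map_eq]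
    _ = ν.map (Φ ∘ Prod.map (· + c) id) := by
      rw [Measure.map_map (by fun_prop) hΦm, hcomm]
    _ ≪ μ := (hΦ.quasiMeasurePreserving.comp hshift).absolutelyContinuous

end QuasiInvariance

section PathSpace

/-- `PathSpace` as a closed subspace of `C([0,1])`, from which it inherits its vector space
structure. -/
def basedPaths : Submodule ℝ C(unitInterval, ℝ) where
  carrier := {f | f 0 = 0}
  zero_mem' := rfl
  add_mem' hf hg := by simp_all
  smul_mem' c f hf := by simp_all

instance : AddCommGroup PathSpace := inferInstanceAs (AddCommGroup basedPaths)
instance : Module ℝ PathSpace := inferInstanceAs (Module ℝ basedPaths)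
instance : IsTopologicalAddGroup PathSpace := inferInstanceAs (IsTopologicalAddGroup basedPaths)
instance : ContinuousSMul ℝ PathSpace := inferInstanceAs (ContinuousSMul ℝ basedPaths)

instance : PolishSpace PathSpace :=
  have : IsClosed {f : C(unitInterval, ℝ) | f 0 = 0} := isClosed_eq (by fun_prop) (by fun_prop)
  this.polishSpace

lemma coe_smul_apply (c : ℝ) (f : PathSpace) (t : unitInterval) : (c • f).1 t = c * f.1 t := rfl

lemma coe_sum_apply {ι : Type*} (s : Finset ι) (f : ι → PathSpace) (t : unitInterval) :
    (∑ i ∈ s, f i).1 t = ∑ i ∈ s, (f i).1 t :=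
  (DFunLike.congr_fun (map_sum basedPaths.subtype f s) t).trans (ContinuousMap.sum_apply _ _ _)

lemma measurable_eval (t : unitInterval) : Measurable fun ω : PathSpace => ω.1 t :=
  Continuous.measurable (by fun_prop)

/- Evaluation along a dense sequence is a continuous injection of a Polish space, so it generates
the Borel σ-algebra by the Lusin–Souslin theorem. -/
lemma measurableEmbedding_eval_denseSeq :
    MeasurableEmbedding fun (ω : PathSpace) (k : ℕ) =>
      ω.1 (TopologicalSpace.denseSeq unitInterval k) := by
  refine Continuous.measurableEmbedding (by fun_prop) fun ω₁ ω₂ h => ?_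
  refine Subtype.ext (DFunLike.coe_injective ?_)
  exact (TopologicalSpace.denseRange_denseSeq unitInterval).equalizer ω₁.1.continuous
    ω₂.1.continuous h

end PathSpace

section GaussianPaths

open ProbabilityTheory
open TopologicalSpace (denseSeq)

lemma isGaussianProcess_sumElim_sub_mul {Ω T : Type*} [MeasurableSpace Ω] {P : Measure Ω}
    {X : T → Ω → ℝ} (hX : ProbabilityTheory.IsGaussianProcess X P) (s : T) (a : T → ℝ) :
    ProbabilityTheory.IsGaussianProcess
      (Sum.elim (fun (_ : Unit) ω => X s ω) (fun t ω => X t ω - X s ω * a t)) P := by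
  classical
  refine hX.of_isGaussianProcess ?_
  let pr (I : Finset T) (t : I) : (I → ℝ) →L[ℝ] ℝ := ContinuousLinearMap.proj t
  rintro (_ | t)
  · exact ⟨{s}, pr {s} ⟨s, by simp⟩, fun ω => rfl⟩
  · exact ⟨{s, t}, pr {s, t} ⟨t, by simp⟩ - a t • pr {s, t} ⟨s, by simp⟩,
      fun ω => by simp [pr, mul_comm]⟩

lemma indepFun_sub_mul_of_covariance_eq {Ω T : Type*} [MeasurableSpace Ω] {P : Measure Ω}
    {X : T → Ω → ℝ} (hX : ProbabilityTheory.IsGaussianProcess X P) {s : T} {a : T → ℝ}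
    (ha : ∀ t, cov[X s, X t; P] = a t * Var[X s; P]) :
    IndepFun (X s) (fun ω t => X t ω - X s ω * a t) P := by
  have := hX.isProbabilityMeasure
  have hm (t : T) : AEMeasurable (X t) P := (hX.hasGaussianLaw_eval t).aemeasurable
  have hmem (t : T) : MemLp (X t) 2 P := (hX.hasGaussianLaw_eval t).memLp_two
  have hind := (isGaussianProcess_sumElim_sub_mul hX s a).indepFun_of_covariance_eq_zero
    (fun _ => hm s) (fun t => (hm t).sub ((hm s).mul_const _)) fun _ t => by
      rw [covariance_fun_sub_right (hmem s) (hmem t) ((hmem s).mul_const _), ha,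
        covariance_mul_const_right, covariance_self (hm s), mul_comm, sub_self]
  exact hind.comp (measurable_pi_apply ()) measurable_id

lemma IsGaussianProcess.isGaussianProcess_eval {μ : Measure PathSpace}
    {K : unitInterval → unitInterval → ℝ} (hμ : IsGaussianProcess μ K) :
    ProbabilityTheory.IsGaussianProcess (fun (t : unitInterval) (ω : PathSpace) => ω.1 t) μ where
  hasGaussianLaw I := by
    classical
    refine ⟨isGaussian_of_map_eq_gaussianReal fun L => ?_⟩
    let e := I.equivFin.symm
    let c (i : I) : ℝ := L fun j => if i = j then 1 else 0
    refine ⟨0, _, Eq.trans ?_ (hμ.2 _ (fun i => (e i : unitInterval)) (fun i => c (e i)))⟩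
    rw [Measure.map_map (by fun_prop) (by fun_prop)]
    congr 1
    ext ω
    calc L (I.restrict fun t => ω.1 t)
        = ∑ i : I, ω.1 i * c i := LinearMap.pi_apply_eq_sum_univ L.toLinearMap _
      _ = ∑ i, c i * ω.1 i := Finset.sum_congr rfl fun _ _ => mul_comm _ _
      _ = ∑ i, c (e i) * ω.1 (e i) := (Equiv.sum_comp e fun i => c i * ω.1 i).symm

variable {μ : Measure PathSpace} {s : unitInterval}

lemma indepFun_eval_sub_smul
    (hμ : ProbabilityTheory.IsGaussianProcess (fun (t : unitInterval) (ω : PathSpace) => ω.1 t) μ)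
    {k : PathSpace}
    (hk : ∀ t, cov[fun ω => ω.1 s, fun ω => ω.1 t; μ] = k.1 t * Var[fun ω => ω.1 s; μ]) :
    IndepFun (fun ω => ω.1 s) (fun ω => ω - ω.1 s • k) μ := by
  obtain ⟨g, hg, hgr⟩ := measurableEmbedding_eval_denseSeq.exists_measurable_extend
    measurable_id fun _ => ⟨0⟩
  have hind := (indepFun_sub_mul_of_covariance_eq hμ hk).comp measurable_id
    (hg.comp (measurable_pi_lambda _ fun n => measurable_pi_apply (denseSeq unitInterval n)))
  exact hind.congr .rfl (.of_forall fun ω => congrFun hgr (ω - ω.1 s • k))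

lemma smul_mem_quasiInvariantShifts_of_covariance_eq
    (hμ : ProbabilityTheory.IsGaussianProcess (fun (t : unitInterval) (ω : PathSpace) => ω.1 t) μ)
    {k : PathSpace}
    (hk : ∀ t, cov[fun ω => ω.1 s, fun ω => ω.1 t; μ] = k.1 t * Var[fun ω => ω.1 s; μ])
    (hs : 0 < Var[fun ω => ω.1 s; μ]) (c : ℝ) : c • k ∈ quasiInvariantShifts μ := by
  have := hμ.isProbabilityMeasure
  refine smul_mem_quasiInvariantShifts_of_indepFun (measurable_eval s)
    (indepFun_eval_sub_smul hμ hk) ?_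
  rw [(hμ.hasGaussianLaw_eval s).map_eq_gaussianReal]
  exact mem_quasiInvariantShifts_gaussianReal (Real.toNNReal_pos.2 hs).ne' c

lemma measure_singleton_eq_zero_of_variance_pos
    (hμ : ProbabilityTheory.IsGaussianProcess (fun (t : unitInterval) (ω : PathSpace) => ω.1 t) μ)
    (hs : 0 < Var[fun ω => ω.1 s; μ]) (ω : PathSpace) : μ {ω} = 0 := by
  have hmap := (hμ.hasGaussianLaw_eval s).map_eq_gaussianReal
  have hnull : (μ.map fun ω => ω.1 s) {ω.1 s} = 0 := by
    rw [hmap]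
    have := nullSingletonClass_gaussianReal (μ := μ[fun ω => ω.1 s]) (Real.toNNReal_pos.2 hs).ne'
    exact measure_singleton _
  rw [Measure.map_apply (measurable_eval s) (measurableSet_singleton _)] at hnull
  exact measure_mono_null (by simp) hnull

end GaussianPaths

section Grid

lemma monotone_gridPt (n : ℕ) : Monotone (gridPt n) := fun i j hij =>
  Subtype.coe_le_coe.1 <| by
    change min (max ((i : ℝ) / n) 0) 1 ≤ min (max ((j : ℝ) / n) 0) 1
    gcongr

lemma coe_gridPt {n j : ℕ} (hj : j ≤ n) : (gridPt n j : ℝ) = j / n := by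
  have h : (j : ℝ) / n ≤ 1 := div_le_one_of_le₀ (by exact_mod_cast hj) (by positivity)
  change min (max ((j : ℝ) / n) 0) 1 = j / n
  rw [max_eq_left (by positivity), min_eq_left h]

lemma gridPt_zero (n : ℕ) : gridPt n 0 = 0 :=
  Subtype.ext (by simpa using coe_gridPt (Nat.zero_le n))

lemma gridPt_self {n : ℕ} (hn : n ≠ 0) : gridPt n n = 1 :=
  Subtype.ext (by simpa [hn] using coe_gridPt (le_refl n))

lemma coe_gridPt_succ_sub {n j : ℕ} (hj : j < n) :
    (gridPt n (j + 1) : ℝ) - gridPt n j = 1 / n := by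
  rw [coe_gridPt hj.le, coe_gridPt hj]
  push_cast
  ring

lemma exists_mem_Icc_gridPt {n : ℕ} (hn : n ≠ 0) (t : unitInterval) :
    ∃ k < n, t ∈ Icc (gridPt n k) (gridPt n (k + 1)) := by
  rcases eq_or_ne t 0 with rfl | ht
  · exact ⟨0, Nat.pos_of_ne_zero hn, by simp [gridPt_zero]⟩
  have hmem : t ∈ Ioc (gridPt n 0) (gridPt n n) := by
    rw [gridPt_zero, gridPt_self hn]
    exact ⟨unitInterval.pos_iff_ne_zero.2 ht, unitInterval.le_one'⟩
  rw [← (monotone_gridPt n).biUnion_Ico_Ioc_map_succ] at hmem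
  obtain ⟨k, hk, hkt⟩ := mem_iUnion₂.1 hmem
  exact ⟨k, hk.2, Ioc_subset_Icc_self hkt⟩

lemma exists_dist_gridPt_le {n : ℕ} (hn : n ≠ 0) (t : unitInterval) :
    ∃ j ∈ Finset.Icc 1 n, dist (gridPt n j) t ≤ 1 / n := by
  obtain ⟨k, hk, ht⟩ := exists_mem_Icc_gridPt hn t
  have hkt : (gridPt n k : ℝ) ≤ t := ht.1
  have htk : (t : ℝ) ≤ gridPt n (k + 1) := ht.2
  refine ⟨k + 1, by simpa using hk, ?_⟩
  rw [Subtype.dist_eq, Real.dist_eq, abs_of_nonneg (by linarith), ← coe_gridPt_succ_sub hk]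
  linarith

end Grid

section Ramp

/-- The path `t ↦ min s t`. Covariance with `ω s` under the Wiener measure is given by this path,
so it spans the corresponding Cameron–Martin direction. -/
def ramp (s : unitInterval) : PathSpace :=
  ⟨⟨fun t => min (s : ℝ) t, by fun_prop⟩, min_eq_right s.2.1⟩

@[simp]
lemma ramp_zero : ramp 0 = 0 :=
  Subtype.ext (ContinuousMap.ext fun t => min_eq_left t.2.1)

/-- The continuous path that is affine on each cell of the `1/n`-grid and agrees with `ω` at the
grid points. -/
def gridInterp (n : ℕ) (ω : PathSpace) : PathSpace :=
  ∑ j ∈ Finset.range n,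
    (n * (ω.1 (gridPt n (j + 1)) - ω.1 (gridPt n j))) •
      (ramp (gridPt n (j + 1)) - ramp (gridPt n j))

lemma gridInterp_mem_span_ramp (n : ℕ) (ω : PathSpace) :
    gridInterp n ω ∈ Submodule.span ℝ (range ramp) :=
  Submodule.sum_mem _ fun _ _ => Submodule.smul_mem _ _ <|
    Submodule.sub_mem _ (Submodule.subset_span ⟨_, rfl⟩) (Submodule.subset_span ⟨_, rfl⟩)

lemma gridInterp_apply_of_mem_Icc (ω : PathSpace) {n k : ℕ} (hk : k < n) {t : unitInterval}
    (ht : t ∈ Icc (gridPt n k) (gridPt n (k + 1))) :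
    (gridInterp n ω).1 t =
      AffineMap.lineMap (ω.1 (gridPt n k)) (ω.1 (gridPt n (k + 1)))
        (n * ((t : ℝ) - gridPt n k)) := by
  let Δ (j : ℕ) : ℝ := ω.1 (gridPt n (j + 1)) - ω.1 (gridPt n j)
  let f (j : ℕ) : ℝ := n * Δ j * (min (gridPt n (j + 1) : ℝ) t - min (gridPt n j : ℝ) t)
  have hn : (n : ℝ) ≠ 0 := Nat.cast_ne_zero.2 (by lia)
  have hmono {i j : ℕ} (hij : i ≤ j) : (gridPt n i : ℝ) ≤ gridPt n j := monotone_gridPt n hij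
  have hkt : (gridPt n k : ℝ) ≤ t := ht.1
  have htk : (t : ℝ) ≤ gridPt n (k + 1) := ht.2
  have hleft (j : ℕ) (hj : j < k) : f j = Δ j := by
    have h : (gridPt n (j + 1) : ℝ) ≤ t := (hmono hj).trans hkt
    simp only [f]
    rw [min_eq_left h, min_eq_left ((hmono j.le_succ).trans h), coe_gridPt_succ_sub (hj.trans hk)]
    field_simp
  have hright (j : ℕ) (hj : k < j) : f j = 0 := by
    have h : (t : ℝ) ≤ gridPt n j := htk.trans (hmono hj)
    simp [f, min_eq_right h, min_eq_right (h.trans (hmono j.le_succ))]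
  calc (gridInterp n ω).1 t = ∑ j ∈ Finset.range n, f j := coe_sum_apply _ _ _
    _ = ∑ j ∈ Finset.range (k + 1), f j :=
      (Finset.sum_subset (Finset.range_subset_range.2 hk) fun j _ hj =>
        hright j (by simpa using hj)).symm
    _ = ∑ j ∈ Finset.range k, Δ j + f k := by
      rw [Finset.sum_range_succ, Finset.sum_congr rfl fun j hj => hleft j (Finset.mem_range.1 hj)]
    _ = ω.1 (gridPt n k) + f k := by
      rw [Finset.sum_range_sub (fun j => ω.1 (gridPt n j)), gridPt_zero, ω.2, sub_zero]
    _ = _ := by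
      simp only [f, Δ, min_eq_left hkt, min_eq_right htk, AffineMap.lineMap_apply_ring']
      ring

lemma dist_gridInterp_le (ω : PathSpace) {n : ℕ} (hn : n ≠ 0) {η : ℝ}
    (h : ∀ s t, dist s t ≤ 1 / (n : ℝ) → dist (ω.1 s) (ω.1 t) ≤ η) :
    dist (gridInterp n ω) ω ≤ η := by
  have hη : 0 ≤ η := by simpa using h 0 0 (by simp)
  refine (ContinuousMap.dist_le hη).2 fun t => ?_
  obtain ⟨k, hk, ht⟩ := exists_mem_Icc_gridPt hn t
  have hkt : (gridPt n k : ℝ) ≤ t := ht.1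
  have htk : (t : ℝ) ≤ gridPt n (k + 1) := ht.2
  have hcell := coe_gridPt_succ_sub hk
  have hn' : (0 : ℝ) < n := by positivity
  have hθ : (n : ℝ) * (t - gridPt n k) ∈ Icc (0 : ℝ) 1 := by
    refine ⟨mul_nonneg hn'.le (by linarith), ?_⟩
    rw [← le_div_iff₀' hn']
    linarith
  rw [gridInterp_apply_of_mem_Icc ω hk ht, ← mem_closedBall]
  refine (convex_closedBall (ω.1 t) η).lineMap_mem (h _ _ ?_) (h _ _ ?_) hθ <;>
    rw [Subtype.dist_eq, Real.dist_eq, abs_le] <;> constructor <;> linarith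

lemma tendsto_gridInterp (ω : PathSpace) : Tendsto (gridInterp · ω) atTop (𝓝 ω) := by
  refine Metric.tendsto_nhds.2 fun η hη => ?_
  obtain ⟨δ, hδ, h⟩ := Metric.uniformContinuous_iff.1
    (CompactSpace.uniformContinuous_of_continuous ω.1.continuous) (η / 2) (half_pos hη)
  filter_upwards [tendsto_one_div_atTop_nhds_zero_nat.eventually_lt_const hδ,
    eventually_ne_atTop 0] with n hnδ hn
  have hdist : dist (gridInterp n ω) ω ≤ η / 2 :=
    dist_gridInterp_le ω hn fun s t hst => (h (hst.trans_lt hnδ)).le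
  exact hdist.trans_lt (half_lt_self hη)

lemma dense_span_ramp : Dense (Submodule.span ℝ (range ramp) : Set PathSpace) := fun ω =>
  mem_closure_of_tendsto (tendsto_gridInterp ω)
    (.of_forall fun n => gridInterp_mem_span_ramp n ω)

end Ramp

section Wiener

open ProbabilityTheory

lemma IsGaussianProcess.variance_sum {μ : Measure PathSpace}
    {K : unitInterval → unitInterval → ℝ} (hμ : IsGaussianProcess μ K) {n : ℕ}
    (t : Fin n → unitInterval) (c : Fin n → ℝ) :
    Var[fun ω : PathSpace => ∑ i, c i * ω.1 (t i); μ] =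
      max (∑ i, ∑ j, c i * c j * K (t i) (t j)) 0 := by
  have hlaw : HasLaw (fun ω : PathSpace => ∑ i, c i * ω.1 (t i)) (gaussianReal 0 _) μ :=
    ⟨by fun_prop, hμ.2 n t c⟩
  rw [hlaw.variance_eq, variance_id_gaussianReal, Real.coe_toNNReal']

namespace IsWienerMeasure

variable {W : Measure PathSpace}

lemma variance_eval (hW : IsWienerMeasure W) (t : unitInterval) :
    Var[fun ω : PathSpace => ω.1 t; W] = t := by
  simpa [t.2.1] using hW.variance_sum ![t] ![1]

lemma variance_sub (hW : IsWienerMeasure W) (s t : unitInterval) :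
    Var[fun ω : PathSpace => ω.1 s - ω.1 t; W] = s + t - 2 * min (s : ℝ) t := by
  have h : Var[fun ω : PathSpace => ω.1 s - ω.1 t; W] =
      max ((s - min (s : ℝ) t) + (t - min (s : ℝ) t)) 0 := by
    simpa [Fin.sum_univ_two, sub_eq_add_neg, min_comm (t : ℝ) s, add_comm (t : ℝ)]
      using hW.variance_sum ![s, t] ![1, -1]
  rw [h, max_eq_left (by linarith [min_le_left (s : ℝ) t, min_le_right (s : ℝ) t])]
  ring

lemma covariance_eval (hW : IsWienerMeasure W) (s t : unitInterval) :
    cov[fun ω : PathSpace => ω.1 s, fun ω : PathSpace => ω.1 t; W] = min (s : ℝ) t := by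
  have := hW.1
  have hmem (u : unitInterval) : MemLp (fun ω : PathSpace => ω.1 u) 2 W :=
    (hW.isGaussianProcess_eval.hasGaussianLaw_eval u).memLp_two
  have h := hW.variance_sub s t
  rw [variance_fun_sub (hmem s) (hmem t), hW.variance_eval, hW.variance_eval] at h
  linarith

lemma smul_ramp_mem_quasiInvariantShifts (hW : IsWienerMeasure W) (c : ℝ) (s : unitInterval) :
    c • ramp s ∈ quasiInvariantShifts W := by
  rcases eq_or_ne s 0 with rfl | hs
  · simp
  have hs' : 0 < (s : ℝ) := unitInterval.pos_iff_ne_zero.2 hs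
  have hmem := smul_mem_quasiInvariantShifts_of_covariance_eq hW.isGaussianProcess_eval (s := s)
    (k := (s : ℝ)⁻¹ • ramp s) (fun t => ?_) (by rwa [hW.variance_eval]) (c * s)
  · rwa [smul_smul, mul_assoc, mul_inv_cancel₀ hs'.ne', mul_one] at hmem
  · rw [hW.covariance_eval, hW.variance_eval, coe_smul_apply]
    simp only [ramp, ContinuousMap.coe_mk]
    field_simp

lemma dense_quasiInvariantShifts (hW : IsWienerMeasure W) :
    Dense (quasiInvariantShifts W : Set PathSpace) := by
  refine dense_span_ramp.mono fun h hh => ?_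
  induction hh using Submodule.closure_induction with
  | zero => exact zero_mem _
  | add _ _ _ _ h₁ h₂ => exact add_mem h₁ h₂
  | smul_mem c _ hs =>
    obtain ⟨s, rfl⟩ := hs
    exact hW.smul_ramp_mem_quasiInvariantShifts c s

lemma support_eq_univ (hW : IsWienerMeasure W) : W.support = univ := by
  have := hW.1
  exact support_eq_univ_of_dense_quasiInvariantShifts (IsProbabilityMeasure.ne_zero W)
    hW.dense_quasiInvariantShifts

lemma measure_singleton (hW : IsWienerMeasure W) (ω : PathSpace) : W {ω} = 0 :=
  measure_singleton_eq_zero_of_variance_pos hW.isGaussianProcess_eval (s := 1)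
    (by simp [hW.variance_eval]) ω

end IsWienerMeasure

end Wiener

section Cylinder

lemma ball_subset_cylinder (ωb : PathSpace) (n : ℕ) (r : ℝ) : ball ωb r ⊆ cylinder ωb n r :=
  fun _ hω _ _ => ((ContinuousMap.dist_apply_le_dist _).trans_lt hω).le

lemma isClosed_cylinder (ωb : PathSpace) (n : ℕ) (r : ℝ) : IsClosed (cylinder ωb n r) := by
  simp only [cylinder, ofPred_forall]
  exact isClosed_biInter fun j _ => isClosed_le (by fun_prop) continuous_const

lemma eventually_notMem_cylinder {ω ωb : PathSpace} (hω : ω ≠ ωb) {ε : ℕ → ℝ}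
    (hlim : Tendsto ε atTop (𝓝 0)) : ∀ᶠ n in atTop, ω ∉ cylinder ωb n (ε n) := by
  obtain ⟨t, ht⟩ : ∃ t, ω.1 t ≠ ωb.1 t := by
    by_contra! h
    exact hω (Subtype.ext (ContinuousMap.ext h))
  have hd : 0 < |ω.1 t - ωb.1 t| := abs_pos.2 (sub_ne_zero.2 ht)
  have hcont : Continuous fun x => |ω.1 x - ωb.1 x| := by fun_prop
  obtain ⟨δ, hδ, hnear⟩ := Metric.eventually_nhds_iff.1
    ((hcont.tendsto t).eventually_const_lt (half_lt_self hd))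
  filter_upwards [hlim.eventually_lt_const (half_pos hd), eventually_ne_atTop 0,
    tendsto_one_div_atTop_nhds_zero_nat.eventually_lt_const hδ] with n hεn hn hnδ hmem
  obtain ⟨j, hj, hjt⟩ := exists_dist_gridPt_le hn t
  exact ((hnear (hjt.trans_lt hnδ)).trans_le (hmem j hj)).not_gt hεn

lemma tendsto_measure_cylinder (μ : Measure PathSpace) [IsFiniteMeasure μ] (ωb : PathSpace)
    {ε : ℕ → ℝ} (hnonneg : ∀ n, 0 ≤ ε n) (hlim : Tendsto ε atTop (𝓝 0)) :
    Tendsto (fun n => μ (cylinder ωb n (ε n))) atTop (𝓝 (μ {ωb})) := by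
  refine tendsto_measure_of_tendsto_indicator_of_isFiniteMeasure atTop μ
    (fun n => (isClosed_cylinder ωb n _).measurableSet) fun ω => ?_
  rcases eq_or_ne ω ωb with rfl | hω
  · exact .of_forall fun n => iff_of_true (fun _ _ => by simpa using hnonneg n) rfl
  · exact (eventually_notMem_cylinder hω hlim).mono fun _ hn => iff_of_false hn hω

/- Once the cylinder has measure below `1 / e`, its double logarithm is a genuine nonnegative value,
which monotonicity of `log` compares with those of the smaller balls. -/
lemma eventually_loglog_cylinder_le {μ : Measure PathSpace} [IsFiniteMeasure μ] {ωb : PathSpace}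
    (hsupp : ωb ∈ μ.support) (hatom : μ {ωb} = 0) {ε : ℕ → ℝ} (hpos : ∀ n, 0 < ε n)
    (hlim : Tendsto ε atTop (𝓝 0)) :
    ∀ᶠ n in atTop, 0 ≤ Real.log (-Real.log (μ (cylinder ωb n (ε n))).toReal) ∧
      ∀ r ∈ Ioc 0 (ε n), Real.log (-Real.log (μ (cylinder ωb n (ε n))).toReal) ≤
        Real.log (-Real.log (μ (ball ωb r)).toReal) := by
  have hreal : Tendsto (fun n => (μ (cylinder ωb n (ε n))).toReal) atTop (𝓝 0) :=
    (ENNReal.tendsto_toReal ENNReal.zero_ne_top).comp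
      (hatom ▸ tendsto_measure_cylinder μ ωb (fun n => (hpos n).le) hlim)
  filter_upwards [hreal.eventually_lt_const (Real.exp_pos (-1))] with n hn
  set c := (μ (cylinder ωb n (ε n))).toReal
  have hball_pos {r : ℝ} (hr : 0 < r) : 0 < (μ (ball ωb r)).toReal :=
    ENNReal.toReal_pos ((Measure.mem_support_iff_forall _).1 hsupp _ (ball_mem_nhds _ hr)).ne'
      (measure_ne_top _ _)
  have hball_le {r : ℝ} (hr : r ≤ ε n) : (μ (ball ωb r)).toReal ≤ c :=
    ENNReal.toReal_mono (measure_ne_top _ _) <|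
      measure_mono ((ball_subset_ball hr).trans (ball_subset_cylinder ωb n (ε n)))
  have hlogc : 1 ≤ -Real.log c := by
    have := (Real.log_le_iff_le_exp ((hball_pos (hpos n)).trans_le (hball_le le_rfl))).2 hn.le
    linarith
  refine ⟨Real.log_nonneg hlogc, fun r hr => Real.log_le_log (by linarith) (neg_le_neg ?_)⟩
  exact Real.log_le_log (hball_pos hr.1) (hball_le hr.2)

end Cylinder

section Interpolation

lemma liminf_le_liminf_of_eventually_exists_ge {α β : Type*} [CompleteLattice β] {l : Filter α}
    {w : ℕ → β} {v : α → β} (h : ∀ N, ∀ᶠ x in l, ∃ n ≥ N, w n ≤ v x) :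
    liminf w atTop ≤ liminf v l := by
  rw [liminf_eq_iSup_iInf_of_nat]
  refine iSup_le fun N => le_liminf_of_le (by isBoundedDefault) ((h N).mono ?_)
  rintro x ⟨n, hn, hwv⟩
  exact iInf₂_le_of_le n hn hwv

lemma exists_mem_Ioc_of_tendsto_zero {ε : ℕ → ℝ} (hlim : Tendsto ε atTop (𝓝 0)) {r : ℝ}
    (hr : 0 < r) {N : ℕ} (hN : r ≤ ε N) : ∃ n ≥ N, r ∈ Ioc (ε (n + 1)) (ε n) := by
  by_contra! hcon
  have hge (n : ℕ) (hn : N ≤ n) : r ≤ ε n := by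
    induction n, hn using Nat.le_induction with
    | base => exact hN
    | succ n hn ih => exact not_lt.1 fun h => hcon n hn ⟨h, ih⟩
  exact hr.not_ge (ge_of_tendsto hlim (eventually_atTop.2 ⟨N, hge⟩))

variable {ε a : ℕ → ℝ} {F : ℝ → ℝ}

lemma liminf_div_neg_log_le_succ (hpos : ∀ n, 0 < ε n) (hlim : Tendsto ε atTop (𝓝 0))
    (hlog : Tendsto (fun n => Real.log (ε n) / Real.log (ε (n + 1))) atTop (𝓝 1))
    (ha : ∀ᶠ n in atTop, 0 ≤ a n) :
    liminf (fun n => ((a n / -Real.log (ε n) : ℝ) : EReal)) atTop ≤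
      liminf (fun n => ((a n / -Real.log (ε (n + 1)) : ℝ) : EReal)) atTop := by
  have hε : ∀ᶠ n in atTop, Real.log (ε n) < 0 :=
    (hlim.eventually_lt_const one_pos).mono fun n hn => Real.log_neg (hpos n) hn
  let u (n : ℕ) : EReal := (a n / -Real.log (ε n) : ℝ)
  let ρ (n : ℕ) : EReal := (Real.log (ε n) / Real.log (ε (n + 1)) : ℝ)
  have hρ : liminf ρ atTop = 1 := (EReal.tendsto_coe.2 hlog).liminf_eq
  have hu0 : ∀ᶠ n in atTop, 0 ≤ u n := by
    filter_upwards [ha, hε] with n han hεn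
    exact EReal.coe_nonneg.2 (div_nonneg han (by linarith))
  have hρ0 : ∀ᶠ n in atTop, 0 ≤ ρ n :=
    (hlog.eventually_const_le one_pos).mono fun n hn => EReal.coe_nonneg.2 hn
  calc liminf u atTop = liminf u atTop * liminf ρ atTop := by rw [hρ, mul_one]
    _ ≤ liminf (u * ρ) atTop := EReal.le_liminf_mul hu0 hρ0
    _ = _ := liminf_congr <| by
      filter_upwards [hε] with n hεn
      rw [Pi.mul_apply, ← EReal.coe_mul]
      congr 1
      field_simp [hεn.ne]

lemma liminf_div_neg_log_le_liminf_nhdsGT (hpos : ∀ n, 0 < ε n) (hlim : Tendsto ε atTop (𝓝 0))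
    (hlog : Tendsto (fun n => Real.log (ε n) / Real.log (ε (n + 1))) atTop (𝓝 1))
    (haF : ∀ᶠ n in atTop, 0 ≤ a n ∧ ∀ r ∈ Ioc 0 (ε n), a n ≤ F r) :
    liminf (fun n => ((a n / -Real.log (ε n) : ℝ) : EReal)) atTop ≤
      liminf (fun r => ((F r / -Real.log r : ℝ) : EReal)) (𝓝[>] 0) := by
  refine (liminf_div_neg_log_le_succ hpos hlim hlog (haF.mono fun _ h => h.1)).trans ?_
  refine liminf_le_liminf_of_eventually_exists_ge fun N => ?_
  obtain ⟨M, hM⟩ := eventually_atTop.1 (haF.and (hlim.eventually_lt_const one_pos))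
  filter_upwards [Ioc_mem_nhdsGT (hpos (max N M))] with r hr
  obtain ⟨n, hn, hnr, hrn⟩ := exists_mem_Ioc_of_tendsto_zero hlim hr.1 hr.2
  obtain ⟨⟨ha, hF⟩, hε⟩ := hM n (le_of_max_le_right hn)
  have hr1 : Real.log r < 0 := Real.log_neg hr.1 (hrn.trans_lt hε)
  have hle : Real.log (ε (n + 1)) ≤ Real.log r := Real.log_le_log (hpos _) hnr.le
  refine ⟨n, le_of_max_le_left hn, EReal.coe_le_coe_iff.2 ?_⟩
  calc a n / -Real.log (ε (n + 1)) ≤ a n / -Real.log r :=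
        div_le_div_of_nonneg_left ha (by linarith) (by linarith)
    _ ≤ F r / -Real.log r := div_le_div_of_nonneg_right (hF r ⟨hr.1, hrn⟩) (by linarith)

lemma limsup_div_neg_log_le_limsup_nhdsGT (hpos : ∀ n, 0 < ε n) (hlim : Tendsto ε atTop (𝓝 0))
    (haF : ∀ᶠ n in atTop, a n ≤ F (ε n)) :
    limsup (fun n => ((a n / -Real.log (ε n) : ℝ) : EReal)) atTop ≤
      limsup (fun r => ((F r / -Real.log r : ℝ) : EReal)) (𝓝[>] 0) := by
  have hle : ∀ᶠ n in atTop, ((a n / -Real.log (ε n) : ℝ) : EReal) ≤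
      ((F (ε n) / -Real.log (ε n) : ℝ) : EReal) := by
    filter_upwards [haF, hlim.eventually_lt_const one_pos] with n hn hε
    have := Real.log_neg (hpos n) hε
    exact EReal.coe_le_coe_iff.2 (div_le_div_of_nonneg_right hn (by linarith))
  have hε : Tendsto ε atTop (𝓝[>] 0) := tendsto_nhdsWithin_iff.2 ⟨hlim, .of_forall hpos⟩
  calc _ ≤ limsup (fun n => ((F (ε n) / -Real.log (ε n) : ℝ) : EReal)) atTop :=
        limsup_le_limsup hle
    _ = limsup (fun r => ((F r / -Real.log r : ℝ) : EReal)) (map ε atTop) := rfl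
    _ ≤ _ := limsup_le_limsup_of_le hε

end Interpolation

theorem cylinder_lower_bounds_general (μ : Measure PathSpace) [IsFiniteMeasure μ] (ωb : PathSpace)
    (hsupp : ωb ∈ μ.support) (hatom : μ {ωb} = 0)
    (ε : ℕ → ℝ) (hpos : ∀ n, 0 < ε n) (hlim : Tendsto ε atTop (𝓝 0))
    (hlog : Tendsto (fun n : ℕ => Real.log (ε n) / Real.log (ε (n + 1))) atTop (𝓝 1)) :
    liminf (fun n : ℕ =>
        ((Real.log (-Real.log ((μ (cylinder ωb n (ε n))).toReal)) / (-Real.log (ε n)) : ℝ)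
          : EReal)) atTop ≤ lowerLocOrd μ ωb ∧
    limsup (fun n : ℕ =>
        ((Real.log (-Real.log ((μ (cylinder ωb n (ε n))).toReal)) / (-Real.log (ε n)) : ℝ)
          : EReal)) atTop ≤ upperLocOrd μ ωb := by
  have hcomp := eventually_loglog_cylinder_le hsupp hatom hpos hlim
  exact ⟨liminf_div_neg_log_le_liminf_nhdsGT hpos hlim hlog hcomp,
    limsup_div_neg_log_le_limsup_nhdsGT hpos hlim
      (hcomp.mono fun n hn => hn.2 (ε n) ⟨hpos n, le_rfl⟩)⟩

/-- The local orders of the Wiener measure are bounded below by the corresponding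
asymptotics of cylinder measures along a sequence `ε_n ↓ 0` with
`log ε_n ∼ log ε_{n+1}`. -/
theorem cylinder_lower_bounds (W : Measure PathSpace) (hW : IsWienerMeasure W)
    (ε : ℕ → ℝ) (hpos : ∀ n, 0 < ε n) (hdec : StrictAnti ε)
    (hlim : Tendsto ε atTop (𝓝 (0:ℝ)))
    (hlog : Tendsto (fun n : ℕ => Real.log (ε n) / Real.log (ε (n+1))) atTop (𝓝 (1:ℝ)))
    (ωb : PathSpace) :
    liminf (fun n : ℕ =>
        ((Real.log (-Real.log ((W (cylinder ωb n (ε n))).toReal)) / (-Real.log (ε n)) : ℝ)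
          : EReal)) atTop ≤ lowerLocOrd W ωb ∧
    limsup (fun n : ℕ =>
        ((Real.log (-Real.log ((W (cylinder ωb n (ε n))).toReal)) / (-Real.log (ε n)) : ℝ)
          : EReal)) atTop ≤ upperLocOrd W ωb := by
  have := hW.1
  exact cylinder_lower_bounds_general W ωb (hW.support_eq_univ ▸ mem_univ ωb)
    (hW.measure_singleton ωb) ε hpos hlim hlog

end Multifractal
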